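/- Let |ψ⟩ be a three-qubit pure state that is a product of a qubit state |φ⟩_B on the second factor and a two-qubit state |χ⟩_{AC} on the first and third factors (bipartition B|AC). Then for every choice of Hermitian qubit observables X₀, X₁ (Alice) and Y₀, Y₁ (Bob) with eigenvalues ±1 such that the four conditioning events in CP (with Z₀ = σx, Z₁ = σy) have positive probability, one has CP < 4; i.e., no such state can attain the algebraic maximum CP = 4. -/

import Mathlib

open Matrix Complex
open scoped Matrix Kronecker ComplexOrder

noncomputable section
namespace Paper

/-- Pauli X. -/
def sx : Matrix (Fin 2) (Fin 2) ℂ := !![0, 1; 1, 0]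
/-- Pauli Y. -/
def sy : Matrix (Fin 2) (Fin 2) ℂ := !![0, -Complex.I; Complex.I, 0]
/-- Pauli Z. -/
def sz : Matrix (Fin 2) (Fin 2) ℂ := !![1, 0; 0, -1]

/-- Projector onto outcome `a ∈ {0,1}` of a dichotomic observable `O`:
`Π₀ = (I+O)/2`, `Π₁ = (I−O)/2`. -/
def Proj {d : ℕ} (a : Fin 2) (O : Matrix (Fin d) (Fin d) ℂ) : Matrix (Fin d) (Fin d) ℂ :=
  (2 : ℂ)⁻¹ • (1 + if a = 0 then O else -O)

/-- Outer product `|ψ⟩⟨ψ|`. -/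
def outer {n : Type*} (ψ : n → ℂ) : Matrix n n ℂ :=
  Matrix.of fun i j => ψ i * star (ψ j)

/-- `ψ` is a unit vector. -/
def UnitVec {n : Type*} [Fintype n] (ψ : n → ℂ) : Prop := ∑ i, star (ψ i) * ψ i = 1

/-- Hermitian observable with eigenvalues `±1`. -/
def Dichotomic {d : ℕ} (O : Matrix (Fin d) (Fin d) ℂ) : Prop := O.IsHermitian ∧ O * O = 1

/-- Partial trace over the first two tensor factors. -/
def trAB {dA dB : ℕ} (M : Matrix (Fin dA × Fin dB × Fin 2) (Fin dA × Fin dB × Fin 2) ℂ) :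
    Matrix (Fin 2) (Fin 2) ℂ :=
  Matrix.of fun i j => ∑ k : Fin dA, ∑ l : Fin dB, M (k, l, i) (k, l, j)

/-- Unnormalized conditional state on Charlie's qubit:
`σ^C_{a,b|X,Y} = Tr_{AB}[(Π_{a|X} ⊗ Π_{b|Y} ⊗ I₂) ρ]`. -/
def condState {dA dB : ℕ} (ρ : Matrix (Fin dA × Fin dB × Fin 2) (Fin dA × Fin dB × Fin 2) ℂ)
    (X : Matrix (Fin dA) (Fin dA) ℂ) (Y : Matrix (Fin dB) (Fin dB) ℂ) (a b : Fin 2) :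
    Matrix (Fin 2) (Fin 2) ℂ :=
  trAB ((Proj a X ⊗ₖ (Proj b Y ⊗ₖ (1 : Matrix (Fin 2) (Fin 2) ℂ))) * ρ)

/-- Conditional probability `P(c_Z | ·) = Tr[Π_{c|Z} σ] / Tr[σ]`. -/
def condProb (Z σ : Matrix (Fin 2) (Fin 2) ℂ) (c : Fin 2) : ℝ :=
  ((Proj c Z * σ).trace).re / (σ.trace).re

/-- The fine-grained steering expression
`CP = P(0_{Z₀}|1_{X₀}1_{Y₀}) + P(0_{Z₀}|0_{X₁}1_{Y₁}) + P(0_{Z₁}|0_{X₀}1_{Y₁}) + P(0_{Z₁}|0_{X₁}1_{Y₀})`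
with `Z₀ = σx`, `Z₁ = σy`. -/
def CP {dA dB : ℕ} (ρ : Matrix (Fin dA × Fin dB × Fin 2) (Fin dA × Fin dB × Fin 2) ℂ)
    (X0 X1 : Matrix (Fin dA) (Fin dA) ℂ) (Y0 Y1 : Matrix (Fin dB) (Fin dB) ℂ) : ℝ :=
  condProb sx (condState ρ X0 Y0 1 1) 0 + condProb sx (condState ρ X1 Y1 0 1) 0 +
  condProb sy (condState ρ X0 Y1 0 1) 0 + condProb sy (condState ρ X1 Y0 0 1) 0

/-- The four conditioning events in `CP` have positive probability. -/
def PosEvents {dA dB : ℕ} (ρ : Matrix (Fin dA × Fin dB × Fin 2) (Fin dA × Fin dB × Fin 2) ℂ)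
    (X0 X1 : Matrix (Fin dA) (Fin dA) ℂ) (Y0 Y1 : Matrix (Fin dB) (Fin dB) ℂ) : Prop :=
  0 < ((condState ρ X0 Y0 1 1).trace).re ∧ 0 < ((condState ρ X1 Y1 0 1).trace).re ∧
  0 < ((condState ρ X0 Y1 0 1).trace).re ∧ 0 < ((condState ρ X1 Y0 0 1).trace).re

/-- Product across the bipartition `A|BC`. -/
def BisepA {dA dB : ℕ} (ψ : Fin dA × Fin dB × Fin 2 → ℂ) : Prop :=
  ∃ (u : Fin dA → ℂ) (v : Fin dB × Fin 2 → ℂ), ∀ i j k, ψ (i, j, k) = u i * v (j, k)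

/-- Product across the bipartition `B|AC`. -/
def BisepB {dA dB : ℕ} (ψ : Fin dA × Fin dB × Fin 2 → ℂ) : Prop :=
  ∃ (u : Fin dB → ℂ) (v : Fin dA × Fin 2 → ℂ), ∀ i j k, ψ (i, j, k) = u j * v (i, k)

/-- Product across the bipartition `C|AB`. -/
def BisepC {dA dB : ℕ} (ψ : Fin dA × Fin dB × Fin 2 → ℂ) : Prop :=
  ∃ (u : Fin 2 → ℂ) (v : Fin dA × Fin dB → ℂ), ∀ i j k, ψ (i, j, k) = v (i, j) * u k

/-- Genuine multipartite entanglement: not a product across any bipartition. -/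
def GenEnt {dA dB : ℕ} (ψ : Fin dA × Fin dB × Fin 2 → ℂ) : Prop :=
  ¬ BisepA ψ ∧ ¬ BisepB ψ ∧ ¬ BisepC ψ

/-!
For a state that is a product across `B|AC`, the statistics that Alice's outcome leaves on Charlie's
qubit do not depend on what Bob measures or finds. The second and fourth terms of `CP`, both
conditioned on Alice's outcome `0` of `X₁`, are therefore the probabilities of `σx = 1` and `σy = 1`
in one and the same qubit state. As `σx` and `σy` anticommute, these add up to at most `1 + 1 / √2`,
while the other two terms are at most `1` each.
-/

section PosSemidef

variable {n : Type*} [Fintype n]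

open scoped MatrixOrder Matrix.Norms.L2Operator in
lemma trace_mul_nonneg_of_posSemidef {𝕜 : Type*} [RCLike 𝕜] {M N : Matrix n n 𝕜}
    (hM : M.PosSemidef) (hN : N.PosSemidef) : 0 ≤ (M * N).trace := by
  classical
  obtain ⟨B, rfl⟩ := CStarAlgebra.nonneg_iff_eq_star_mul_self.mp hM.nonneg
  rw [star_eq_conjTranspose, Matrix.mul_assoc, trace_mul_comm]
  exact (hN.mul_mul_conjTranspose_same B).trace_nonneg

lemma posSemidef_of_dotProduct_mulVec_nonneg {M : Matrix n n ℂ}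
    (h : ∀ x : n → ℂ, 0 ≤ star x ⬝ᵥ (M *ᵥ x)) : M.PosSemidef := by
  classical
  rw [← isPositive_toEuclideanLin_iff, LinearMap.isPositive_iff_complex]
  intro x
  have hinner : inner ℂ (toEuclideanLin M x) x = star (star x.ofLp ⬝ᵥ (M *ᵥ x.ofLp)) := by
    rw [← inner_conj_symm, EuclideanSpace.inner_eq_star_dotProduct, dotProduct_comm]
    rfl
  have hx := Complex.nonneg_iff.1 (h x.ofLp)
  rw [hinner]
  exact ⟨Complex.ext (by simp) (by simp [← hx.2]), by simpa using hx.1⟩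

lemma posSemidef_of_trace_mul_nonneg {M : Matrix n n ℂ}
    (h : ∀ N : Matrix n n ℂ, N.PosSemidef → 0 ≤ (N * M).trace) : M.PosSemidef := by
  refine posSemidef_of_dotProduct_mulVec_nonneg fun x => ?_
  have hx := h _ (posSemidef_vecMulVec_self_star x)
  rwa [vecMulVec_mul, trace_vecMulVec, dotProduct_comm, ← dotProduct_mulVec] at hx

end PosSemidef

lemma posSemidef_outer {n : Type*} [Finite n] (ψ : n → ℂ) : (outer ψ).PosSemidef :=
  posSemidef_vecMulVec_self_star ψ

section Projector

variable {d : ℕ} {A B O : Matrix (Fin d) (Fin d) ℂ}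

lemma Dichotomic.neg (hO : Dichotomic O) : Dichotomic (-O) :=
  ⟨hO.1.neg, by rw [neg_mul_neg, hO.2]⟩

lemma one_sub_proj (a : Fin 2) (O : Matrix (Fin d) (Fin d) ℂ) : 1 - Proj a O = Proj a (-O) := by
  unfold Proj
  split_ifs <;> module

lemma Dichotomic.isStarProjection_half_one_add (hO : Dichotomic O) :
    IsStarProjection ((2 : ℂ)⁻¹ • (1 + O)) where
  isIdempotentElem := by
    have hsq : (1 + O) * (1 + O) = (2 : ℂ) • (1 + O) := by
      rw [mul_add, add_mul, add_mul, hO.2, one_mul, one_mul, mul_one]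
      module
    rw [IsIdempotentElem, smul_mul_smul_comm, hsq, smul_smul]
    norm_num
  isSelfAdjoint := (IsSelfAdjoint.ofNat 2).inv₀.smul ((IsSelfAdjoint.one _).add hO.1)

lemma Dichotomic.isStarProjection_proj (hO : Dichotomic O) (a : Fin 2) :
    IsStarProjection (Proj a O) := by
  unfold Proj
  split_ifs
  exacts [hO.isStarProjection_half_one_add, hO.neg.isStarProjection_half_one_add]

open scoped MatrixOrder in
lemma Dichotomic.posSemidef_proj (hO : Dichotomic O) (a : Fin 2) : (Proj a O).PosSemidef :=
  (hO.isStarProjection_proj a).nonneg.posSemidef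

lemma ofReal_sqrt_two_mul_self : (√2 : ℂ) * √2 = 2 := by
  exact_mod_cast Real.mul_self_sqrt zero_le_two

lemma Dichotomic.sqrt_two_div_two_smul_add (hA : Dichotomic A) (hB : Dichotomic B)
    (hAB : A * B + B * A = 0) : Dichotomic ((√2 / 2 : ℂ) • (A + B)) := by
  have hsq : (A + B) * (A + B) = (2 : ℂ) • 1 := by
    rw [add_mul, mul_add, mul_add, hA.2, hB.2]
    linear_combination (norm := module) hAB
  constructor
  · rw [IsHermitian, conjTranspose_smul, (hA.1.add hB.1).eq]
    simp
  · rw [smul_mul_smul_comm, hsq, smul_smul]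
    linear_combination (norm := module)
      (ofReal_sqrt_two_mul_self / 2) • (1 : Matrix (Fin d) (Fin d) ℂ)

lemma proj_zero_add_proj_zero (A B : Matrix (Fin d) (Fin d) ℂ) :
    Proj 0 A + Proj 0 B =
      (1 + √2 / 2 : ℂ) • 1 - (√2 : ℂ) • Proj 1 ((√2 / 2 : ℂ) • (A + B)) := by
  simp only [Proj, if_true, if_neg one_ne_zero]
  linear_combination (norm := module) (-ofReal_sqrt_two_mul_self / 4) • (A + B)

lemma dichotomic_sx : Dichotomic sx := by
  constructor <;> ext i j <;> fin_cases i <;> fin_cases j <;> simp [sx]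

lemma dichotomic_sy : Dichotomic sy := by
  constructor <;> ext i j <;> fin_cases i <;> fin_cases j <;> simp [sy]

lemma sx_mul_sy_add_sy_mul_sx : sx * sy + sy * sx = 0 := by
  ext i j
  fin_cases i <;> fin_cases j <;> simp [sx, sy]

end Projector

lemma condProb_le_one {Z σ : Matrix (Fin 2) (Fin 2) ℂ} (hZ : Dichotomic Z) (hσ : σ.PosSemidef)
    (c : Fin 2) : condProb Z σ c ≤ 1 := by
  have h := trace_mul_nonneg_of_posSemidef (hZ.neg.posSemidef_proj c) hσ
  rw [← one_sub_proj, Matrix.sub_mul, Matrix.one_mul, trace_sub, sub_nonneg] at h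
  exact div_le_one_of_le₀ (Complex.le_def.1 h).1 (Complex.le_def.1 hσ.trace_nonneg).1

theorem condProb_add_condProb_le {A B σ : Matrix (Fin 2) (Fin 2) ℂ} (hA : Dichotomic A)
    (hB : Dichotomic B) (hAB : A * B + B * A = 0) (hσ : σ.PosSemidef) :
    condProb A σ 0 + condProb B σ 0 ≤ 1 + √2 / 2 := by
  -- As `A` and `B` anticommute, `(A + B) / √2` is again dichotomic, and `Π₀(A) + Π₀(B)` falls
  -- short of `1 + 1 / √2` by exactly `√2` times its projector onto outcome `1`.
  have hN : 0 ≤ (Proj 1 ((√2 / 2 : ℂ) • (A + B)) * σ).trace.re := (Complex.nonneg_iff.1 <|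
    trace_mul_nonneg_of_posSemidef ((hA.sqrt_two_div_two_smul_add hB hAB).posSemidef_proj 1) hσ).1
  have htrace : (Proj 0 A * σ).trace.re + (Proj 0 B * σ).trace.re = (1 + √2 / 2) * σ.trace.re -
      √2 * (Proj 1 ((√2 / 2 : ℂ) • (A + B)) * σ).trace.re := by
    simpa [Matrix.add_mul, Matrix.sub_mul] using
      congrArg (fun M => (M * σ).trace.re) (proj_zero_add_proj_zero A B)
  rw [condProb, condProb, ← add_div]
  refine div_le_of_le_mul₀ (Complex.nonneg_iff.1 hσ.trace_nonneg).1 (by positivity) ?_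
  linarith [mul_nonneg (Real.sqrt_nonneg 2) hN]

section BornRule

variable {dA dB : ℕ}

lemma trace_mul_trAB (Z : Matrix (Fin 2) (Fin 2) ℂ)
    (M : Matrix (Fin dA × Fin dB × Fin 2) (Fin dA × Fin dB × Fin 2) ℂ) :
    (Z * trAB M).trace =
      (((1 : Matrix (Fin dA) (Fin dA) ℂ) ⊗ₖ ((1 : Matrix (Fin dB) (Fin dB) ℂ) ⊗ₖ Z)) *
        M).trace := by
  simp [trAB, trace, Matrix.mul_apply, Fintype.sum_prod_type, one_apply,
    Finset.mul_sum, Finset.sum_add_distrib]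

lemma trace_mul_condState (Z : Matrix (Fin 2) (Fin 2) ℂ)
    (ρ : Matrix (Fin dA × Fin dB × Fin 2) (Fin dA × Fin dB × Fin 2) ℂ)
    (X : Matrix (Fin dA) (Fin dA) ℂ) (Y : Matrix (Fin dB) (Fin dB) ℂ) (a b : Fin 2) :
    (Z * condState ρ X Y a b).trace = ((Proj a X ⊗ₖ (Proj b Y ⊗ₖ Z)) * ρ).trace := by
  simp only [condState, trace_mul_trAB, ← Matrix.mul_assoc, ← mul_kronecker_mul, Matrix.one_mul,
    Matrix.mul_one]

lemma posSemidef_condState {ρ : Matrix (Fin dA × Fin dB × Fin 2) (Fin dA × Fin dB × Fin 2) ℂ}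
    {X : Matrix (Fin dA) (Fin dA) ℂ} {Y : Matrix (Fin dB) (Fin dB) ℂ} (hρ : ρ.PosSemidef)
    (hX : Dichotomic X) (hY : Dichotomic Y) (a b : Fin 2) : (condState ρ X Y a b).PosSemidef := by
  refine posSemidef_of_trace_mul_nonneg fun N hN => ?_
  rw [trace_mul_condState]
  exact trace_mul_nonneg_of_posSemidef
    ((hX.posSemidef_proj a).kronecker ((hY.posSemidef_proj b).kronecker hN)) hρ

end BornRule

section Product

variable {A B C α : Type*} [CommSemiring α]

/-- The reordering of indices that carries `A ⊗ B ⊗ C` to `(A ⊗ C) ⊗ B`. -/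
def splitB (A B C : Type*) : A × B × C ≃ (A × C) × B where
  toFun i := ((i.1, i.2.2), i.2.1)
  invFun i := (i.1.1, i.2, i.1.2)

/-- The operator that is a product across the bipartition `B|AC`, with factor `R` on `AC` and `S` on
`B`; its tensor factors are ordered as `A ⊗ B ⊗ C`. -/
def productB (R : Matrix (A × C) (A × C) α) (S : Matrix B B α) :
    Matrix (A × B × C) (A × B × C) α :=
  (R ⊗ₖ S).submatrix (splitB A B C) (splitB A B C)

lemma outer_eq_productB (χ : A × C → ℂ) (φ : B → ℂ) :
    (outer fun i : A × B × C => χ (i.1, i.2.2) * φ i.2.1) = productB (outer χ) (outer φ) := by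
  ext i j
  simp only [outer, of_apply, star_mul']
  exact mul_mul_mul_comm _ _ _ _

lemma kronecker_kronecker_eq_productB (P : Matrix A A α) (Q : Matrix B B α) (Z : Matrix C C α) :
    P ⊗ₖ (Q ⊗ₖ Z) = productB (P ⊗ₖ Z) Q := by
  ext i j
  exact (mul_left_comm _ _ _).trans (mul_comm _ _)

lemma posSemidef_productB [Finite A] [Finite B] [Finite C] {R : Matrix (A × C) (A × C) ℂ}
    {S : Matrix B B ℂ} (hR : R.PosSemidef) (hS : S.PosSemidef) : (productB R S).PosSemidef :=
  (hR.kronecker hS).submatrix _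

variable [Fintype A] [Fintype B] [Fintype C]

lemma productB_mul_productB (R₁ R₂ : Matrix (A × C) (A × C) α) (S₁ S₂ : Matrix B B α) :
    productB R₁ S₁ * productB R₂ S₂ = productB (R₁ * R₂) (S₁ * S₂) := by
  simp only [productB, submatrix_mul_equiv, mul_kronecker_mul]

lemma trace_productB (R : Matrix (A × C) (A × C) α) (S : Matrix B B α) :
    (productB R S).trace = R.trace * S.trace := by
  rw [← trace_kronecker]
  exact (splitB A B C).sum_comp fun i => (R ⊗ₖ S) i i

end Product

section Steering

variable {dA dB : ℕ}

lemma trace_mul_condState_productB (Z : Matrix (Fin 2) (Fin 2) ℂ)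
    (ρAC : Matrix (Fin dA × Fin 2) (Fin dA × Fin 2) ℂ) (ρB : Matrix (Fin dB) (Fin dB) ℂ)
    (X : Matrix (Fin dA) (Fin dA) ℂ) (Y : Matrix (Fin dB) (Fin dB) ℂ) (a b : Fin 2) :
    (Z * condState (productB ρAC ρB) X Y a b).trace =
      ((Proj a X ⊗ₖ Z) * ρAC).trace * (Proj b Y * ρB).trace := by
  rw [trace_mul_condState, kronecker_kronecker_eq_productB, productB_mul_productB, trace_productB]

lemma condProb_condState_productB {ρAC : Matrix (Fin dA × Fin 2) (Fin dA × Fin 2) ℂ}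
    {ρB Y : Matrix (Fin dB) (Fin dB) ℂ} {X : Matrix (Fin dA) (Fin dA) ℂ} {a b : Fin 2}
    (hρB : ρB.PosSemidef) (hY : Dichotomic Y)
    (hpos : 0 < (condState (productB ρAC ρB) X Y a b).trace.re)
    (Z : Matrix (Fin 2) (Fin 2) ℂ) (c : Fin 2) :
    condProb Z (condState (productB ρAC ρB) X Y a b) c =
      ((Proj a X ⊗ₖ Proj c Z) * ρAC).trace.re /
        ((Proj a X ⊗ₖ (1 : Matrix (Fin 2) (Fin 2) ℂ)) * ρAC).trace.re := by
  obtain ⟨q, hq⟩ : ∃ q : ℝ, (Proj b Y * ρB).trace = q :=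
    ⟨_, Complex.eq_re_of_ofReal_le (trace_mul_nonneg_of_posSemidef (hY.posSemidef_proj b) hρB)⟩
  have htr := trace_mul_condState_productB 1 ρAC ρB X Y a b
  rw [Matrix.one_mul, hq] at htr
  rw [htr, Complex.re_mul_ofReal] at hpos
  rw [condProb, trace_mul_condState_productB, htr, hq, Complex.re_mul_ofReal,
    Complex.re_mul_ofReal, mul_div_mul_right _ _ (right_ne_zero_of_mul hpos.ne')]

theorem stmt15_general {ρAC : Matrix (Fin dA × Fin 2) (Fin dA × Fin 2) ℂ}
    {ρB : Matrix (Fin dB) (Fin dB) ℂ} (hρAC : ρAC.PosSemidef) (hρB : ρB.PosSemidef)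
    {X0 X1 : Matrix (Fin dA) (Fin dA) ℂ} {Y0 Y1 : Matrix (Fin dB) (Fin dB) ℂ}
    (hX0 : Dichotomic X0) (hX1 : Dichotomic X1) (hY0 : Dichotomic Y0) (hY1 : Dichotomic Y1)
    (hpos : PosEvents (productB ρAC ρB) X0 X1 Y0 Y1) :
    CP (productB ρAC ρB) X0 X1 Y0 Y1 ≤ 3 + √2 / 2 := by
  obtain ⟨-, hpos11, -, hpos10⟩ := hpos
  have hρ := posSemidef_productB hρAC hρB
  have hbob : condProb sy (condState (productB ρAC ρB) X1 Y0 0 1) 0 =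
      condProb sy (condState (productB ρAC ρB) X1 Y1 0 1) 0 := by
    rw [condProb_condState_productB hρB hY0 hpos10, condProb_condState_productB hρB hY1 hpos11]
  have h0 := condProb_le_one dichotomic_sx (posSemidef_condState hρ hX0 hY0 1 1) 0
  have h1 := condProb_le_one dichotomic_sy (posSemidef_condState hρ hX0 hY1 0 1) 0
  have huncertainty := condProb_add_condProb_le dichotomic_sx dichotomic_sy
    sx_mul_sy_add_sy_mul_sx (posSemidef_condState hρ hX1 hY1 0 1)
  rw [CP, hbob]
  linarith

end Steering

/-- no three-qubit pure state that is a product across the bipartition `B|AC`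
can attain the algebraic maximum `CP = 4`. -/
theorem stmt15 (φB : Fin 2 → ℂ) (χ : Fin 2 × Fin 2 → ℂ)
    (hφ : UnitVec φB) (hχ : UnitVec χ)
    (X0 X1 Y0 Y1 : Matrix (Fin 2) (Fin 2) ℂ)
    (hX0 : Dichotomic X0) (hX1 : Dichotomic X1) (hY0 : Dichotomic Y0) (hY1 : Dichotomic Y1)
    (hpos : PosEvents (outer fun i : Fin 2 × Fin 2 × Fin 2 => χ (i.1, i.2.2) * φB i.2.1)
      X0 X1 Y0 Y1) :
    CP (outer fun i : Fin 2 × Fin 2 × Fin 2 => χ (i.1, i.2.2) * φB i.2.1) X0 X1 Y0 Y1 < 4 := by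
  rw [outer_eq_productB] at hpos ⊢
  exact (stmt15_general (posSemidef_outer χ) (posSemidef_outer φB) hX0 hX1 hY0 hY1 hpos).trans_lt
    (by linarith [Real.sqrt_two_lt_three_halves])

end Paper
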